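/- Let n ≥ 1, s ∈ (0,1) with n > 2s, and let K be an admissible kernel. Assume q = n/(n−2s) (the critical Serrin exponent). Then every nonnegative weak supersolution u of L_K u = u^q in ℝⁿ satisfies u = 0 almost everywhere in ℝⁿ. -/

import Mathlib

open MeasureTheory Metric

noncomputable section

abbrev Euc (n : ℕ) := EuclideanSpace ℝ (Fin n)

def IsAdmissibleKernel (n : ℕ) (s lam Lam : ℝ) (K : Euc n → ℝ) : Prop :=
  0 < lam ∧ lam ≤ Lam ∧ Measurable K ∧
  (∀ z : Euc n, z ≠ 0 → K z = K (-z)) ∧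
  (∀ z : Euc n, z ≠ 0 →
    lam * ‖z‖ ^ (-(n : ℝ) - 2 * s) ≤ K z ∧ K z ≤ Lam * ‖z‖ ^ (-(n : ℝ) - 2 * s))

def LK (n : ℕ) (K φ : Euc n → ℝ) (x : Euc n) : ℝ :=
  (1 / 2) * ∫ z : Euc n, (2 * φ x - φ (x + z) - φ (x - z)) * K z

def IsTestFun (n : ℕ) (φ : Euc n → ℝ) : Prop :=
  ContDiff ℝ (⊤ : ℕ∞) φ ∧ HasCompactSupport φ

def MemL1Tail (n : ℕ) (s : ℝ) (u : Euc n → ℝ) : Prop :=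
  LocallyIntegrable u volume ∧
  Integrable (fun x : Euc n => |u x| * (1 + ‖x‖) ^ (-(n : ℝ) - 2 * s)) volume

def MemLqLoc (n : ℕ) (q : ℝ) (u : Euc n → ℝ) : Prop :=
  ∀ R : ℝ, 0 < R → IntegrableOn (fun x : Euc n => u x ^ q) (ball (0 : Euc n) R) volume

def IsWeakSupersol (n : ℕ) (s q : ℝ) (K u : Euc n → ℝ) : Prop :=
  Measurable u ∧ (∀ x, 0 ≤ u x) ∧ MemLqLoc n q u ∧ MemL1Tail n s u ∧
  ∀ φ : Euc n → ℝ, IsTestFun n φ → (∀ x, 0 ≤ φ x) →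
    (∫ x : Euc n, u x ^ q * φ x) ≤ ∫ x : Euc n, u x * LK n K φ x

def IsCutoff (n : ℕ) (η : Euc n → ℝ) : Prop :=
  ContDiff ℝ (⊤ : ℕ∞) η ∧ (∀ x, 0 ≤ η x ∧ η x ≤ 1) ∧
  (∀ x : Euc n, ‖x‖ ≤ 1 → η x = 1) ∧ (∀ x : Euc n, 2 ≤ ‖x‖ → η x = 0)

def cutoffSq (n : ℕ) (η : Euc n → ℝ) (R : ℝ) : Euc n → ℝ :=
  fun x => (η (R⁻¹ • x)) ^ 2

/-!
Test the inequality with `η_R ^ (k + 1)`, where `η_R` is a smooth cutoff at scale `R` and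
`k + 1 ≤ k q`. Convexity of powers bounds `L_K (η_R ^ (k + 1))` by `C R ^ (-2s) η_R ^ k`, so that
`∫ u ^ q η_R ^ (k + 1) ≤ C R ^ (-2s) ∫ u η_R ^ k`. Splitting the right-hand integral at a fixed
ball of radius `r` and applying Hölder outside it gives
`∫ u ^ q η_R ^ (k + 1) ≤ C R ^ (-2s) ∫_{B_r} u + D (∫_{B_rᶜ} u ^ q η_R ^ (k + 1)) ^ (1 / q)`,
where `D` does not depend on `R ≥ 1` because `(n - 2s) q ≤ n`. With `r = 0` the last term is
absorbed and `u ^ q` is integrable; letting `R → ∞` and then `r → ∞` yields `∫ u ^ q = 0`.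
-/

open Filter Topology

section SecondDifference

variable {E F : Type*} [NormedAddCommGroup E] [NormedSpace ℝ E] [NormedAddCommGroup F]
  [NormedSpace ℝ F] {f : E → F}

lemma norm_second_difference_le_of_lipschitzWith_fderiv (hf : Differentiable ℝ f) {D : NNReal}
    (hD : LipschitzWith D (fderiv ℝ f)) (x z : E) :
    ‖(2 : ℝ) • f x - f (x + z) - f (x - z)‖ ≤ 2 * D * ‖z‖ ^ 2 := by
  let g : E → F := fun w ↦ f (x + w) + f (x - w)
  have hg (w : E) : HasFDerivAt g (fderiv ℝ f (x + w) - fderiv ℝ f (x - w)) w := by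
    have hadd := (hf (x + w)).hasFDerivAt.comp w ((hasFDerivAt_id w).const_add x)
    have hsub := (hf (x - w)).hasFDerivAt.comp w ((hasFDerivAt_id w).const_sub x)
    refine (hadd.add hsub).congr_fderiv ?_
    rw [ContinuousLinearMap.comp_neg, ContinuousLinearMap.comp_id, ContinuousLinearMap.comp_id,
      ← sub_eq_add_neg]
  have hg_norm : ∀ w ∈ closedBall (0 : E) ‖z‖,
      ‖fderiv ℝ f (x + w) - fderiv ℝ f (x - w)‖ ≤ 2 * D * ‖z‖ := fun w hw ↦
    calc ‖fderiv ℝ f (x + w) - fderiv ℝ f (x - w)‖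
        ≤ D * ‖(x + w) - (x - w)‖ := hD.norm_sub_le _ _
      _ = D * (2 * ‖w‖) := by
          rw [add_sub_sub_cancel, ← two_smul ℝ, norm_smul, Real.norm_ofNat]
      _ ≤ 2 * D * ‖z‖ := by
          rw [mul_left_comm, ← mul_assoc]
          gcongr
          exact mem_closedBall_zero_iff.1 hw
  have hmvt := (convex_closedBall (0 : E) ‖z‖).norm_image_sub_le_of_norm_hasFDerivWithin_le
    (fun w _ ↦ (hg w).hasFDerivWithinAt) hg_norm (mem_closedBall_self (norm_nonneg z))
    (mem_closedBall_zero_iff.2 le_rfl)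
  calc ‖(2 : ℝ) • f x - f (x + z) - f (x - z)‖ = ‖g z - g 0‖ := by
        rw [sub_sub, norm_sub_rev, two_smul]
        simp only [g, add_zero, sub_zero]
    _ ≤ 2 * D * ‖z‖ ^ 2 := by rwa [sub_zero, mul_assoc, ← sq] at hmvt

lemma exists_norm_second_difference_le_min (hf : ContDiff ℝ 2 f) (hfc : HasCompactSupport f) :
    ∃ C, 0 ≤ C ∧ ∀ x z, ‖(2 : ℝ) • f x - f (x + z) - f (x - z)‖ ≤ C * min 1 (‖z‖ ^ 2) := by
  obtain ⟨D, hD⟩ := ContDiff.lipschitzWith_of_hasCompactSupport (hfc.fderiv ℝ)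
    (hf.fderiv_right (m := 1) (by norm_num)) one_ne_zero
  obtain ⟨M, hM⟩ := hfc.exists_bound_of_continuous hf.continuous
  have hM0 : 0 ≤ M := (norm_nonneg _).trans (hM 0)
  refine ⟨max (4 * M) (2 * D), by positivity, fun x z ↦ ?_⟩
  have hsup : ‖(2 : ℝ) • f x - f (x + z) - f (x - z)‖ ≤ 4 * M := by
    have htriangle := norm_sub_le_of_le
      (norm_sub_le ((2 : ℝ) • f x) (f (x + z))) (le_refl ‖f (x - z)‖)
    rw [norm_smul, Real.norm_ofNat] at htriangle
    linarith [hM x, hM (x + z), hM (x - z)]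
  have hquad := norm_second_difference_le_of_lipschitzWith_fderiv
    (hf.differentiable two_ne_zero) hD x z
  rw [mul_min_of_nonneg _ _ (by positivity), mul_one]
  exact le_min (hsup.trans (le_max_left _ _))
    (hquad.trans (mul_le_mul_of_nonneg_right (le_max_right _ _) (sq_nonneg _)))

end SecondDifference

section LevyWeight

variable {E : Type*} [NormedAddCommGroup E]

/-- The radial weight `min(1, |z|²) |z|^{-d-2s}` on a space of dimension `d`: its integral controls
an operator of order `2s` acting on functions with bounded second differences. -/
def levyWeight (d s : ℝ) (z : E) : ℝ := min 1 (‖z‖ ^ 2) * ‖z‖ ^ (-d - 2 * s)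

lemma levyWeight_nonneg (d s : ℝ) (z : E) : 0 ≤ levyWeight d s z := by
  unfold levyWeight; positivity

variable [NormedSpace ℝ E]

lemma min_mul_rpow_eq_levyWeight_smul (d s : ℝ) {R : ℝ} (hR : 0 < R) (z : E) :
    min 1 (‖R⁻¹ • z‖ ^ 2) * ‖z‖ ^ (-d - 2 * s) =
      R ^ (-d - 2 * s) * levyWeight d s (R⁻¹ • z) := by
  have hnorm : ‖z‖ = R * ‖R⁻¹ • z‖ := by
    rw [norm_smul, norm_inv, Real.norm_of_nonneg hR.le, mul_inv_cancel_left₀ hR.ne']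
  rw [levyWeight, mul_left_comm, ← Real.mul_rpow hR.le (norm_nonneg _), ← hnorm]

variable [Nontrivial E] [FiniteDimensional ℝ E] [MeasurableSpace E] [BorelSpace E]

lemma integrable_levyWeight (μ : Measure E) [μ.IsAddHaarMeasure] {s : ℝ}
    (hs : s ∈ Set.Ioo (0 : ℝ) 1) :
    Integrable (levyWeight (E := E) (Module.finrank ℝ E) s) μ := by
  set d := Module.finrank ℝ E
  refine (integrable_fun_norm_addHaar μ
    (f := fun y : ℝ ↦ min 1 (y ^ 2) * y ^ (-(d : ℝ) - 2 * s))).2 ?_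
  have hd : 1 ≤ d := Module.finrank_pos
  have hrpow {y : ℝ} (hy : 0 < y) : y ^ (d - 1) * y ^ (-(d : ℝ) - 2 * s) = y ^ (-1 - 2 * s) := by
    rw [← Real.rpow_natCast, ← Real.rpow_add hy, Nat.cast_sub hd]
    ring_nf
  have hnear : IntegrableOn (fun y : ℝ ↦ y ^ (1 - 2 * s)) (Set.Ioc 0 1) := by
    rw [← intervalIntegrable_iff_integrableOn_Ioc_of_le zero_le_one]
    exact intervalIntegral.intervalIntegrable_rpow' (by linarith [hs.2])
  have hfar : IntegrableOn (fun y : ℝ ↦ y ^ (-1 - 2 * s)) (Set.Ioi 1) :=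
    integrableOn_Ioi_rpow_of_lt (by linarith [hs.1]) one_pos
  rw [← Set.Ioc_union_Ioi_eq_Ioi (zero_le_one' ℝ)]
  refine (hnear.congr_fun (fun y hy ↦ ?_) measurableSet_Ioc).union
    (hfar.congr_fun (fun y hy ↦ ?_) measurableSet_Ioi)
  · rw [min_eq_right (pow_le_one₀ hy.1.le hy.2), smul_eq_mul, mul_left_comm, hrpow hy.1,
      ← Real.rpow_natCast, ← Real.rpow_add hy.1]
    push_cast
    ring_nf
  · rw [min_eq_left (one_le_pow₀ (le_of_lt hy)), one_mul, smul_eq_mul,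
      hrpow (zero_lt_one.trans hy)]

end LevyWeight

section Integral

variable {α : Type*} [MeasurableSpace α] {μ : Measure α}

-- If `f` is not integrable, the left-hand side is `0` by convention.
lemma integral_le_integral_of_ae_le_of_ae_nonneg {f g : α → ℝ} (hg : Integrable g μ)
    (hg0 : 0 ≤ᵐ[μ] g) (hfg : f ≤ᵐ[μ] g) : ∫ x, f x ∂μ ≤ ∫ x, g x ∂μ := by
  by_cases hf : Integrable f μ
  · exact integral_mono_ae hf hg hfg
  · rw [integral_undef hf]
    exact integral_nonneg_of_ae hg0

lemma integral_le_rpow_integral_mul_rpow_measureReal {p q : ℝ} (hqp : q.HolderConjugate p)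
    {f : α → ℝ} {B : Set α} (hf0 : 0 ≤ f) (hf : AEStronglyMeasurable f μ)
    (hfq : Integrable (fun x ↦ f x ^ q) μ) (hB : MeasurableSet B) (hμB : μ B ≠ ⊤)
    (hfB : ∀ x ∉ B, f x = 0) :
    ∫ x, f x ∂μ ≤ (∫ x, f x ^ q ∂μ) ^ (1 / q) * μ.real B ^ (1 / p) := by
  have hf_memLp : MemLp f (ENNReal.ofReal q) μ := by
    rw [← integrable_norm_rpow_iff hf (by simpa using hqp.pos) ENNReal.ofReal_ne_top,
      ENNReal.toReal_ofReal hqp.nonneg]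
    exact hfq.congr (.of_forall fun x ↦ by simp only [Real.norm_of_nonneg (hf0 x)])
  have hHolder := integral_mul_le_Lp_mul_Lq_of_nonneg hqp (.of_forall hf0)
    (.of_forall (Set.indicator_nonneg (s := B) fun _ _ ↦ zero_le_one)) hf_memLp
    (memLp_indicator_const _ hB (1 : ℝ) (.inr hμB))
  have hleft (x : α) : f x * B.indicator (fun _ ↦ (1 : ℝ)) x = f x := by
    by_cases hx : x ∈ B <;> simp [hx, hfB]
  have hright (x : α) : B.indicator (fun _ ↦ (1 : ℝ)) x ^ p = B.indicator (fun _ ↦ 1) x := by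
    by_cases hx : x ∈ B <;> simp [hx, hqp.symm.ne_zero]
  simpa only [hleft, hright, integral_indicator_const _ hB, smul_eq_mul, mul_one] using hHolder

lemma integral_eq_zero_of_tail_estimate [PseudoMetricSpace α] [OpensMeasurableSpace α] {x₀ : α}
    {f : α → ℝ} (hf : Integrable f μ) (hf0 : 0 ≤ f) {a b : ℝ → ℝ}
    (ha : Tendsto a atTop (𝓝 0)) {D θ : ℝ} (hθ : 0 < θ)
    (htail : ∀ r, ∀ᶠ R in atTop, ∫ x in ball x₀ R, f x ∂μ ≤
      a R * b r + D * (∫ x in (ball x₀ r)ᶜ, f x ∂μ) ^ θ) :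
    ∫ x, f x ∂μ = 0 := by
  have hballs : Tendsto (fun R ↦ ∫ x in ball x₀ R, f x ∂μ) atTop (𝓝 (∫ x, f x ∂μ)) :=
    (aecover_ball tendsto_id).integral_tendsto_of_countably_generated hf
  have htails : Tendsto (fun r ↦ ∫ x in (ball x₀ r)ᶜ, f x ∂μ) atTop (𝓝 0) := by
    have hcompl (r : ℝ) : ∫ x in (ball x₀ r)ᶜ, f x ∂μ =
        ∫ x, f x ∂μ - ∫ x in ball x₀ r, f x ∂μ := setIntegral_compl measurableSet_ball hf
    simpa only [hcompl, sub_self] using hballs.const_sub (∫ x, f x ∂μ)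
  have htotal (r : ℝ) : ∫ x, f x ∂μ ≤ D * (∫ x in (ball x₀ r)ᶜ, f x ∂μ) ^ θ := by
    refine le_of_tendsto_of_tendsto hballs ?_ (htail r)
    simpa only [zero_mul, zero_add] using
      (ha.mul_const (b r)).add_const (D * (∫ x in (ball x₀ r)ᶜ, f x ∂μ) ^ θ)
  have hlimit := (htails.rpow_const (.inr hθ.le)).const_mul D
  rw [Real.zero_rpow hθ.ne', mul_zero] at hlimit
  exact le_antisymm (ge_of_tendsto' hlimit htotal) (integral_nonneg hf0)

end Integral

lemma le_rpow_of_le_mul_rpow_one_div {p q : ℝ} (hqp : q.HolderConjugate p) {X D : ℝ}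
    (hX : 0 ≤ X) (hD : 0 ≤ D) (h : X ≤ D * X ^ (1 / q)) : X ≤ D ^ p := by
  rcases hX.eq_or_lt with rfl | hX
  · exact Real.rpow_nonneg hD p
  have hsplit : X = X ^ (1 / p) * X ^ (1 / q) := by
    rw [← Real.rpow_add hX, one_div, one_div, hqp.symm.inv_add_inv_eq_one, Real.rpow_one]
  have hroot : X ^ (1 / p) ≤ D := by
    refine le_of_mul_le_mul_right ?_ (Real.rpow_pos_of_pos hX (1 / q))
    rwa [← hsplit]
  calc X = (X ^ (1 / p)) ^ p := by
        rw [one_div, Real.rpow_inv_rpow hX.le hqp.symm.ne_zero]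
    _ ≤ D ^ p := Real.rpow_le_rpow (by positivity) hroot hqp.symm.nonneg

lemma two_mul_pow_sub_pow_sub_pow_le {a b c : ℝ} (ha : 0 ≤ a) (hb : 0 ≤ b) (hc : 0 ≤ c) (m : ℕ) :
    2 * a ^ m - b ^ m - c ^ m ≤ m * a ^ (m - 1) * (2 * a - b - c) := by
  have htangent {y : ℝ} (hy : 0 ≤ y) : a ^ m + m * a ^ (m - 1) * (y - a) ≤ y ^ m := by
    simpa only [add_sub_cancel] using
      pow_add_mul_le_add_pow ha (show 0 ≤ 2 * a + (y - a) by linarith) m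
  linarith [htangent hb, htangent hc]

/-- Nonnegative kernels at most as singular as that of the fractional Laplacian of order `2s`.
Lower ellipticity is not imposed, so degenerate kernels are allowed. -/
def IsUpperBoundedKernel (n : ℕ) (s Lam : ℝ) (K : Euc n → ℝ) : Prop :=
  Measurable K ∧ ∀ z : Euc n, z ≠ 0 → 0 ≤ K z ∧ K z ≤ Lam * ‖z‖ ^ (-(n : ℝ) - 2 * s)

lemma IsAdmissibleKernel.isUpperBoundedKernel {n : ℕ} {s lam Lam : ℝ} {K : Euc n → ℝ}
    (hK : IsAdmissibleKernel n s lam Lam K) : IsUpperBoundedKernel n s Lam K := by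
  obtain ⟨hlam, -, hmeas, -, hbounds⟩ := hK
  exact ⟨hmeas, fun z hz ↦ ⟨le_trans (by positivity) (hbounds z hz).1, (hbounds z hz).2⟩⟩

variable {n : ℕ} {s : ℝ}

lemma integral_levyWeight_inv_smul {R : ℝ} (hR : 0 < R) :
    ∫ z : Euc n, R ^ (-(n : ℝ) - 2 * s) * levyWeight n s (R⁻¹ • z) =
      R ^ (-(2 * s)) * ∫ z : Euc n, levyWeight n s z := by
  have hrpow : R ^ (-(2 * s)) = R ^ (-(n : ℝ) - 2 * s) * R ^ n := by
    rw [← Real.rpow_natCast, ← Real.rpow_add hR]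
    ring_nf
  rw [integral_const_mul, Measure.integral_comp_inv_smul_of_nonneg _ _ hR.le,
    finrank_euclideanSpace_fin, smul_eq_mul, ← mul_assoc, ← hrpow]

namespace IsUpperBoundedKernel

variable {Lam : ℝ} {K : Euc n → ℝ} [NeZero n]

lemma bound_nonneg (hK : IsUpperBoundedKernel n s Lam K) : 0 ≤ Lam := by
  obtain ⟨z, hz⟩ := exists_ne (0 : Euc n)
  exact nonneg_of_mul_nonneg_left ((hK.2 z hz).1.trans (hK.2 z hz).2)
    (Real.rpow_pos_of_pos (norm_pos_iff.2 hz) _)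

lemma LK_le_of_second_difference_le (hK : IsUpperBoundedKernel n s Lam K)
    (hs : s ∈ Set.Ioo (0 : ℝ) 1) {φ : Euc n → ℝ} {x : Euc n} {A R : ℝ} (hA : 0 ≤ A) (hR : 0 < R)
    (hφ : ∀ z, 2 * φ x - φ (x + z) - φ (x - z) ≤ A * min 1 (‖R⁻¹ • z‖ ^ 2)) :
    LK n K φ x ≤ 1 / 2 * (A * Lam * (R ^ (-(2 * s)) * ∫ z : Euc n, levyWeight n s z)) := by
  have hLam := hK.bound_nonneg
  have hweight : Integrable (levyWeight (E := Euc n) n s) := by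
    simpa only [finrank_euclideanSpace_fin] using
      integrable_levyWeight (volume : Measure (Euc n)) hs
  rw [← integral_levyWeight_inv_smul hR, ← integral_const_mul]
  refine mul_le_mul_of_nonneg_left (integral_le_integral_of_ae_le_of_ae_nonneg
    (((hweight.comp_smul (inv_ne_zero hR.ne')).const_mul _).const_mul _)
    (.of_forall fun z ↦ ?_) ?_) one_half_pos.le
  · have := levyWeight_nonneg n s (R⁻¹ • z)
    positivity
  filter_upwards [Measure.ae_ne volume (0 : Euc n)] with z hz
  obtain ⟨hK0, hKLam⟩ := hK.2 z hz
  calc (2 * φ x - φ (x + z) - φ (x - z)) * K z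
      ≤ A * min 1 (‖R⁻¹ • z‖ ^ 2) * K z := mul_le_mul_of_nonneg_right (hφ z) hK0
    _ ≤ A * min 1 (‖R⁻¹ • z‖ ^ 2) * (Lam * ‖z‖ ^ (-(n : ℝ) - 2 * s)) :=
        mul_le_mul_of_nonneg_left hKLam (by positivity)
    _ = A * Lam * (min 1 (‖R⁻¹ • z‖ ^ 2) * ‖z‖ ^ (-(n : ℝ) - 2 * s)) := by ring
    _ = A * Lam * (R ^ (-(n : ℝ) - 2 * s) * levyWeight n s (R⁻¹ • z)) := by
        rw [min_mul_rpow_eq_levyWeight_smul _ _ hR]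

lemma exists_LK_pow_comp_smul_le (hK : IsUpperBoundedKernel n s Lam K)
    (hs : s ∈ Set.Ioo (0 : ℝ) 1) {η : Euc n → ℝ} (hη : ContDiff ℝ 2 η)
    (hηc : HasCompactSupport η) (hη0 : ∀ x, 0 ≤ η x) (m : ℕ) :
    ∃ C, 0 ≤ C ∧ ∀ R, 0 < R → ∀ x,
      LK n K (fun y ↦ η (R⁻¹ • y) ^ m) x ≤ C * R ^ (-(2 * s)) * η (R⁻¹ • x) ^ (m - 1) := by
  obtain ⟨C, hC, hdiff⟩ := exists_norm_second_difference_le_min hη hηc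
  have hLam := hK.bound_nonneg
  have hmass : 0 ≤ ∫ z : Euc n, levyWeight n s z := integral_nonneg (levyWeight_nonneg n s)
  refine ⟨1 / 2 * m * C * Lam * ∫ z : Euc n, levyWeight n s z, by positivity,
    fun R hR x ↦ ?_⟩
  have hηx := hη0 (R⁻¹ • x)
  refine (hK.LK_le_of_second_difference_le hs (A := m * η (R⁻¹ • x) ^ (m - 1) * C)
    (by positivity) hR fun z ↦ ?_).trans (le_of_eq (by ring))
  rw [mul_assoc _ C, smul_add, smul_sub]
  refine (two_mul_pow_sub_pow_sub_pow_le hηx (hη0 _) (hη0 _) m).trans ?_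
  gcongr
  exact (Real.le_norm_self _).trans (hdiff (R⁻¹ • x) (R⁻¹ • z))

end IsUpperBoundedKernel

lemma exists_isCutoff (n : ℕ) : ∃ η : Euc n → ℝ, IsCutoff n η := by
  let b : ContDiffBump (0 : Euc n) := ⟨1, 2, one_pos, one_lt_two⟩
  exact ⟨b, b.contDiff, fun x ↦ ⟨b.nonneg, b.le_one⟩,
    fun x hx ↦ b.one_of_mem_closedBall (mem_closedBall_zero_iff.2 hx),
    fun x hx ↦ b.zero_of_le_dist (by rwa [dist_zero_right])⟩

namespace IsCutoff

variable {η : Euc n → ℝ} {R : ℝ}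

lemma nonneg (hη : IsCutoff n η) (x : Euc n) : 0 ≤ η x := (hη.2.1 x).1

lemma le_one (hη : IsCutoff n η) (x : Euc n) : η x ≤ 1 := (hη.2.1 x).2

lemma comp_smul_eq_one (hη : IsCutoff n η) (hR : 0 < R) {x : Euc n}
    (hx : x ∈ ball (0 : Euc n) R) : η (R⁻¹ • x) = 1 := by
  refine hη.2.2.1 _ ?_
  rw [norm_smul, norm_inv, Real.norm_of_nonneg hR.le, inv_mul_le_one₀ hR]
  exact (mem_ball_zero_iff.1 hx).le

lemma comp_smul_eq_zero (hη : IsCutoff n η) (hR : 0 < R) {x : Euc n}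
    (hx : x ∉ closedBall (0 : Euc n) (2 * R)) : η (R⁻¹ • x) = 0 := by
  refine hη.2.2.2 _ ?_
  rw [mem_closedBall_zero_iff, not_le] at hx
  rw [norm_smul, norm_inv, Real.norm_of_nonneg hR.le, le_inv_mul_iff₀' hR]
  exact hx.le

lemma hasCompactSupport (hη : IsCutoff n η) : HasCompactSupport η :=
  .intro (isCompact_closedBall 0 2) fun x hx ↦
    hη.2.2.2 x (by rw [mem_closedBall_zero_iff, not_le] at hx; exact hx.le)

lemma isTestFun_pow_comp_smul (hη : IsCutoff n η) (hR : 0 < R) {m : ℕ} (hm : m ≠ 0) :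
    IsTestFun n fun x ↦ η (R⁻¹ • x) ^ m :=
  ⟨(hη.1.comp (contDiff_const_smul _)).pow m,
    (hη.hasCompactSupport.comp_smul (inv_ne_zero hR.ne')).comp_left (zero_pow hm)⟩

lemma integrable_mul_pow_comp_smul (hη : IsCutoff n η) (hR : 0 < R) {m : ℕ} (hm : m ≠ 0)
    {f : Euc n → ℝ} (hf : LocallyIntegrable f) :
    Integrable fun x ↦ f x * η (R⁻¹ • x) ^ m := by
  obtain ⟨hsmooth, hcompact⟩ := hη.isTestFun_pow_comp_smul hR hm
  simpa only [smul_eq_mul] using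
    hf.integrable_smul_right_of_hasCompactSupport hsmooth.continuous hcompact

lemma mul_pow_comp_smul_rpow_le (hη : IsCutoff n η) {k : ℕ} {q t : ℝ} (hkq : k + 1 ≤ k * q)
    (ht : 0 ≤ t) (x : Euc n) :
    (t * η (R⁻¹ • x) ^ k) ^ q ≤ t ^ q * η (R⁻¹ • x) ^ (k + 1) := by
  have hηx := hη.nonneg (R⁻¹ • x)
  rw [Real.mul_rpow ht (by positivity), ← Real.rpow_natCast, ← Real.rpow_natCast,
    ← Real.rpow_mul hηx]
  gcongr ?_ * ?_
  refine Real.rpow_le_rpow_of_exponent_ge_of_imp hηx (hη.le_one _) (by exact_mod_cast hkq)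
    fun _ hzero ↦ ?_
  linarith [(Nat.cast_nonneg k : (0 : ℝ) ≤ k)]

end IsCutoff

lemma MemLqLoc.locallyIntegrable {q : ℝ} {u : Euc n → ℝ} (hu : MemLqLoc n q u) :
    LocallyIntegrable fun x ↦ u x ^ q := fun x ↦
  ⟨ball 0 (‖x‖ + 1), isOpen_ball.mem_nhds (mem_ball_zero_iff.2 (lt_add_one _)),
    hu _ (by positivity)⟩

lemma rpow_mul_rpow_measureReal_closedBall_le {p R : ℝ} (hp : 0 < p)
    (hnp : (n : ℝ) ≤ 2 * s * p) (hR : 1 ≤ R) :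
    R ^ (-(2 * s)) * volume.real (closedBall (0 : Euc n) (2 * R)) ^ (1 / p) ≤
      volume.real (closedBall (0 : Euc n) 2) ^ (1 / p) := by
  have hR0 : 0 < R := one_pos.trans_le hR
  have hvolume : volume.real (closedBall (0 : Euc n) (2 * R)) =
      R ^ (n : ℝ) * volume.real (closedBall (0 : Euc n) 2) := by
    rw [Measure.addHaar_real_closedBall _ _ (by positivity),
      Measure.addHaar_real_closedBall _ _ zero_le_two, finrank_euclideanSpace_fin,
      Real.rpow_natCast, mul_pow]
    ring
  have hexponent : -(2 * s) + n * (1 / p) ≤ 0 := by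
    rw [mul_one_div, neg_add_nonpos_iff, div_le_iff₀ hp]
    exact hnp
  rw [hvolume, Real.mul_rpow (by positivity) measureReal_nonneg, ← Real.rpow_mul hR0.le,
    ← mul_assoc, ← Real.rpow_add hR0]
  exact mul_le_of_le_one_left (by positivity) (Real.rpow_le_one_of_one_le_of_nonpos hR hexponent)

lemma exists_nat_add_one_le_mul {q : ℝ} (hq : 1 < q) : ∃ k : ℕ, k ≠ 0 ∧ (k : ℝ) + 1 ≤ k * q := by
  obtain ⟨k, hk⟩ := exists_nat_gt (1 / (q - 1))
  have hk0 : (0 : ℝ) < k := (one_div_pos.2 (sub_pos.2 hq)).trans hk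
  rw [div_lt_iff₀ (sub_pos.2 hq)] at hk
  exact ⟨k, by exact_mod_cast hk0.ne', by linarith⟩

namespace IsCutoff

variable {η f u : Euc n → ℝ} {m k : ℕ} {p q R : ℝ}

lemma setIntegral_mul_pow_comp_smul_le (hη : IsCutoff n η) (hk : k ≠ 0)
    (hqp : q.HolderConjugate p) (hkq : k + 1 ≤ k * q) (hu0 : ∀ x, 0 ≤ u x)
    (hu : LocallyIntegrable u) (huq : LocallyIntegrable fun x ↦ u x ^ q) (hR : 0 < R)
    (S : Set (Euc n)) :
    ∫ x in S, u x * η (R⁻¹ • x) ^ k ≤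
      (∫ x in S, u x ^ q * η (R⁻¹ • x) ^ (k + 1)) ^ (1 / q) *
        volume.real (closedBall (0 : Euc n) (2 * R)) ^ (1 / p) := by
  set g : Euc n → ℝ := fun x ↦ u x * η (R⁻¹ • x) ^ k
  set B : Set (Euc n) := closedBall 0 (2 * R)
  have hg0 (x : Euc n) : 0 ≤ g x := mul_nonneg (hu0 x) (pow_nonneg (hη.nonneg _) _)
  have hgB (x : Euc n) (hx : x ∉ B) : g x = 0 := by
    simp only [g, hη.comp_smul_eq_zero hR hx, zero_pow hk, mul_zero]
  have hg : AEStronglyMeasurable g :=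
    (hη.integrable_mul_pow_comp_smul hR hk hu).aestronglyMeasurable
  have hgq_le (x : Euc n) : g x ^ q ≤ u x ^ q * η (R⁻¹ • x) ^ (k + 1) :=
    hη.mul_pow_comp_smul_rpow_le hkq (hu0 x) x
  have hbound : Integrable fun x ↦ u x ^ q * η (R⁻¹ • x) ^ (k + 1) :=
    hη.integrable_mul_pow_comp_smul hR k.succ_ne_zero huq
  have hgq0 (x : Euc n) : 0 ≤ g x ^ q := Real.rpow_nonneg (hg0 x) q
  have hgq : Integrable fun x ↦ g x ^ q :=
    hbound.mono' (hg.aemeasurable.pow_const q).aestronglyMeasurable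
      (.of_forall fun x ↦ (Real.norm_of_nonneg (hgq0 x)).trans_le (hgq_le x))
  calc ∫ x in S, g x
      ≤ (∫ x in S, g x ^ q) ^ (1 / q) * (volume.restrict S).real B ^ (1 / p) :=
        integral_le_rpow_integral_mul_rpow_measureReal hqp hg0 hg.restrict hgq.integrableOn
          measurableSet_closedBall measure_closedBall_lt_top.ne hgB
    _ ≤ _ := mul_le_mul
        (Real.rpow_le_rpow (integral_nonneg hgq0)
          (setIntegral_mono hgq.integrableOn hbound.integrableOn hgq_le)
          hqp.one_div_nonneg)
        (Real.rpow_le_rpow measureReal_nonneg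
          (ENNReal.toReal_mono measure_closedBall_lt_top.ne (Measure.restrict_apply_le S B))
          hqp.symm.one_div_nonneg)
        (by positivity)
        (Real.rpow_nonneg (integral_nonneg fun x ↦ (hgq0 x).trans (hgq_le x)) _)

lemma integral_mul_pow_comp_smul_le (hη : IsCutoff n η) (hk : k ≠ 0) (hqp : q.HolderConjugate p)
    (hkq : k + 1 ≤ k * q) (hu0 : ∀ x, 0 ≤ u x) (hu : LocallyIntegrable u)
    (huq : LocallyIntegrable fun x ↦ u x ^ q) (hR : 0 < R) (r : ℝ) :
    ∫ x, u x * η (R⁻¹ • x) ^ k ≤ (∫ x in ball 0 r, u x) +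
      (∫ x in (ball 0 r)ᶜ, u x ^ q * η (R⁻¹ • x) ^ (k + 1)) ^ (1 / q) *
        volume.real (closedBall (0 : Euc n) (2 * R)) ^ (1 / p) := by
  have hint : Integrable fun x ↦ u x * η (R⁻¹ • x) ^ k :=
    hη.integrable_mul_pow_comp_smul hR hk hu
  have hinner : ∫ x in ball 0 r, u x * η (R⁻¹ • x) ^ k ≤ ∫ x in ball 0 r, u x :=
    setIntegral_mono hint.integrableOn
      ((hu.integrableOn_isCompact (isCompact_closedBall 0 r)).mono_set ball_subset_closedBall)
      fun x ↦ mul_le_of_le_one_right (hu0 x) (pow_le_one₀ (hη.nonneg _) (hη.le_one _))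
  rw [← integral_add_compl measurableSet_ball hint]
  exact add_le_add hinner
    (hη.setIntegral_mul_pow_comp_smul_le hk hqp hkq hu0 hu huq hR _)

lemma setIntegral_ball_le (hη : IsCutoff n η) (hf : LocallyIntegrable f) (hf0 : 0 ≤ f)
    (hm : m ≠ 0) (hR : 0 < R) :
    ∫ x in ball 0 R, f x ≤ ∫ x, f x * η (R⁻¹ • x) ^ m :=
  calc ∫ x in ball 0 R, f x = ∫ x in ball 0 R, f x * η (R⁻¹ • x) ^ m :=
        setIntegral_congr_fun measurableSet_ball fun x hx ↦ by
          simp only [hη.comp_smul_eq_one hR hx, one_pow, mul_one]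
    _ ≤ _ := setIntegral_le_integral (hη.integrable_mul_pow_comp_smul hR hm hf)
        (.of_forall fun x ↦ mul_nonneg (hf0 x) (pow_nonneg (hη.nonneg _) _))

lemma integrable_of_weighted_integral_le (hη : IsCutoff n η) (hf : LocallyIntegrable f)
    (hf0 : 0 ≤ f) (hm : m ≠ 0) {M : ℝ}
    (hM : ∀ R : ℝ, 1 ≤ R → ∫ x, f x * η (R⁻¹ • x) ^ m ≤ M) : Integrable f := by
  refine (aecover_ball tendsto_id).integrable_of_integral_bounded_of_nonneg_ae M
    (fun R ↦ (hf.integrableOn_isCompact (isCompact_closedBall 0 R)).mono_set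
      ball_subset_closedBall) (.of_forall hf0) ?_
  filter_upwards [eventually_ge_atTop 1] with R hR
  exact (hη.setIntegral_ball_le hf hf0 hm (one_pos.trans_le hR)).trans (hM R hR)

lemma integrable_and_integral_eq_zero_of_tail_estimate (hη : IsCutoff n η)
    (hf : LocallyIntegrable f) (hf0 : 0 ≤ f) (hm : m ≠ 0) (hqp : q.HolderConjugate p)
    {a b : ℝ → ℝ} (ha : Tendsto a atTop (𝓝 0)) (hb : b 0 = 0) {D : ℝ} (hD : 0 ≤ D)
    (htail : ∀ R, 1 ≤ R → ∀ r, ∫ x, f x * η (R⁻¹ • x) ^ m ≤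
      a R * b r + D * (∫ x in (ball 0 r)ᶜ, f x * η (R⁻¹ • x) ^ m) ^ (1 / q)) :
    Integrable f ∧ ∫ x, f x = 0 := by
  have hfη_nonneg (R : ℝ) (x : Euc n) : 0 ≤ f x * η (R⁻¹ • x) ^ m :=
    mul_nonneg (hf0 x) (pow_nonneg (hη.nonneg _) _)
  have hint : Integrable f := by
    refine hη.integrable_of_weighted_integral_le hf hf0 hm (M := D ^ p) fun R hR ↦ ?_
    refine le_rpow_of_le_mul_rpow_one_div hqp (integral_nonneg (hfη_nonneg R)) hD ?_
    simpa only [hb, mul_zero, zero_add, ball_zero, Set.compl_empty, setIntegral_univ]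
      using htail R hR 0
  refine ⟨hint, integral_eq_zero_of_tail_estimate (x₀ := 0) (b := b) (D := D) hint hf0 ha
    hqp.one_div_pos fun r ↦ ?_⟩
  filter_upwards [eventually_ge_atTop 1] with R hR
  have hR0 : 0 < R := one_pos.trans_le hR
  have hweight : ∫ x in (ball 0 r)ᶜ, f x * η (R⁻¹ • x) ^ m ≤ ∫ x in (ball 0 r)ᶜ, f x :=
    setIntegral_mono (hη.integrable_mul_pow_comp_smul hR0 hm hf).integrableOn hint.integrableOn
      fun x ↦ mul_le_of_le_one_right (hf0 x) (pow_le_one₀ (hη.nonneg _) (hη.le_one _))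
  calc ∫ x in ball 0 R, f x
      ≤ ∫ x, f x * η (R⁻¹ • x) ^ m := hη.setIntegral_ball_le hf hf0 hm hR0
    _ ≤ a R * b r + D * (∫ x in (ball 0 r)ᶜ, f x * η (R⁻¹ • x) ^ m) ^ (1 / q) := htail R hR r
    _ ≤ a R * b r + D * (∫ x in (ball 0 r)ᶜ, f x) ^ (1 / q) := by
        have := Real.rpow_le_rpow (integral_nonneg (hfη_nonneg R)) hweight hqp.one_div_nonneg
        gcongr

end IsCutoff

namespace IsWeakSupersol

variable [NeZero n] {q Lam : ℝ} {K u η : Euc n → ℝ}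

lemma exists_integral_rpow_mul_cutoff_le (hu : IsWeakSupersol n s q K u)
    (hK : IsUpperBoundedKernel n s Lam K) (hs : s ∈ Set.Ioo (0 : ℝ) 1) (hη : IsCutoff n η)
    {k : ℕ} (hk : k ≠ 0) :
    ∃ C, 0 ≤ C ∧ ∀ R, 0 < R → ∫ x, u x ^ q * η (R⁻¹ • x) ^ (k + 1) ≤
      C * R ^ (-(2 * s)) * ∫ x, u x * η (R⁻¹ • x) ^ k := by
  obtain ⟨-, hu0, -, ⟨hu_loc, -⟩, hsuper⟩ := hu
  obtain ⟨C, hC, hLK⟩ := hK.exists_LK_pow_comp_smul_le hs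
    (hη.1.of_le (WithTop.coe_le_coe.2 le_top)) hη.hasCompactSupport hη.nonneg (k + 1)
  rw [Nat.add_sub_cancel] at hLK
  refine ⟨C, hC, fun R hR ↦ (hsuper _ (hη.isTestFun_pow_comp_smul hR k.succ_ne_zero)
    fun x ↦ pow_nonneg (hη.nonneg _) _).trans ?_⟩
  rw [← integral_const_mul]
  refine integral_le_integral_of_ae_le_of_ae_nonneg
    ((hη.integrable_mul_pow_comp_smul hR hk hu_loc).const_mul _)
    (.of_forall fun x ↦ ?_) (.of_forall fun x ↦ ?_)
  · have := hu0 x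
    have := hη.nonneg (R⁻¹ • x)
    positivity
  · exact (mul_le_mul_of_nonneg_left (hLK R hR x) (hu0 x)).trans (le_of_eq (by ring))

lemma exists_tail_estimate (hu : IsWeakSupersol n s q K u)
    (hK : IsUpperBoundedKernel n s Lam K) (hs : s ∈ Set.Ioo (0 : ℝ) 1) (hη : IsCutoff n η)
    {k : ℕ} (hk : k ≠ 0) (hkq : k + 1 ≤ k * q) {p : ℝ} (hqp : q.HolderConjugate p)
    (hnp : (n : ℝ) ≤ 2 * s * p) :
    ∃ C D, 0 ≤ D ∧ ∀ R, 1 ≤ R → ∀ r, ∫ x, u x ^ q * η (R⁻¹ • x) ^ (k + 1) ≤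
      C * R ^ (-(2 * s)) * (∫ x in ball 0 r, u x) +
        D * (∫ x in (ball 0 r)ᶜ, u x ^ q * η (R⁻¹ • x) ^ (k + 1)) ^ (1 / q) := by
  obtain ⟨C, hC, henergy⟩ := hu.exists_integral_rpow_mul_cutoff_le hK hs hη hk
  obtain ⟨-, hu0, huq, ⟨hu_loc, -⟩, -⟩ := hu
  refine ⟨C, C * volume.real (closedBall (0 : Euc n) 2) ^ (1 / p), by positivity,
    fun R hR r ↦ ?_⟩
  have hR0 : 0 < R := one_pos.trans_le hR
  set V : ℝ := volume.real (closedBall (0 : Euc n) (2 * R)) ^ (1 / p)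
  set T : ℝ := (∫ x in (ball 0 r)ᶜ, u x ^ q * η (R⁻¹ • x) ^ (k + 1)) ^ (1 / q)
  have hT : 0 ≤ T := Real.rpow_nonneg (integral_nonneg fun x ↦
    mul_nonneg (Real.rpow_nonneg (hu0 x) q) (pow_nonneg (hη.nonneg _) _)) _
  calc ∫ x, u x ^ q * η (R⁻¹ • x) ^ (k + 1)
      ≤ C * R ^ (-(2 * s)) * ∫ x, u x * η (R⁻¹ • x) ^ k := henergy R hR0
    _ ≤ C * R ^ (-(2 * s)) * ((∫ x in ball 0 r, u x) + T * V) :=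
        mul_le_mul_of_nonneg_left (hη.integral_mul_pow_comp_smul_le hk hqp hkq hu0 hu_loc
          huq.locallyIntegrable hR0 r) (by positivity)
    _ = C * R ^ (-(2 * s)) * (∫ x in ball 0 r, u x) + C * (R ^ (-(2 * s)) * V) * T := by ring
    _ ≤ _ := by
        gcongr
        exact rpow_mul_rpow_measureReal_closedBall_le hqp.symm.pos hnp hR

end IsWeakSupersol

theorem liouville_critical_general
    (n : ℕ) (hn : 1 ≤ n) (s : ℝ) (hs : s ∈ Set.Ioo (0 : ℝ) 1)
    (Lam : ℝ) (K : Euc n → ℝ) (hK : IsUpperBoundedKernel n s Lam K)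
    (q : ℝ) (hq1 : 1 < q) (hqn : ((n : ℝ) - 2 * s) * q ≤ n)
    (u : Euc n → ℝ) (hu : IsWeakSupersol n s q K u) :
    ∀ᵐ x : Euc n, u x = 0 := by
  have : NeZero n := ⟨Nat.one_le_iff_ne_zero.1 hn⟩
  have hqp := Real.HolderConjugate.conjExponent hq1
  have hnp : (n : ℝ) ≤ 2 * s * q.conjExponent := by
    rw [Real.conjExponent, ← mul_div_assoc, le_div_iff₀ (sub_pos.2 hq1)]
    linarith
  obtain ⟨k, hk, hkq⟩ := exists_nat_add_one_le_mul hq1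
  obtain ⟨η, hη⟩ := exists_isCutoff n
  obtain ⟨C, D, hD, htail⟩ := hu.exists_tail_estimate hK hs hη hk hkq hqp hnp
  have hdecay : Tendsto (fun R : ℝ ↦ C * R ^ (-(2 * s))) atTop (𝓝 0) := by
    simpa only [mul_zero] using
      (tendsto_rpow_neg_atTop (mul_pos two_pos hs.1)).const_mul C
  obtain ⟨-, hu0, huq, -, -⟩ := hu
  have huq0 : 0 ≤ fun x ↦ u x ^ q := fun x ↦ Real.rpow_nonneg (hu0 x) q
  obtain ⟨hint, hzero⟩ := hη.integrable_and_integral_eq_zero_of_tail_estimate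
    huq.locallyIntegrable huq0 k.succ_ne_zero hqp hdecay (b := fun r ↦ ∫ x in ball 0 r, u x)
    (by simp only [ball_zero, setIntegral_empty]) hD htail
  filter_upwards [(integral_eq_zero_iff_of_nonneg huq0 hint).1 hzero] with x hx
  exact (Real.rpow_eq_zero (hu0 x) hqp.ne_zero).1 hx

/-- Liouville theorem at the critical Serrin exponent `q = n/(n-2s)`. -/
theorem liouville_critical
    (n : ℕ) (hn : 1 ≤ n) (s : ℝ) (hs : s ∈ Set.Ioo (0 : ℝ) 1)
    (hns : 2 * s < (n : ℝ))
    (lam Lam : ℝ) (K : Euc n → ℝ) (hK : IsAdmissibleKernel n s lam Lam K)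
    (q : ℝ) (hq : q = (n : ℝ) / ((n : ℝ) - 2 * s))
    (u : Euc n → ℝ) (hu : IsWeakSupersol n s q K u) :
    ∀ᵐ x : Euc n, u x = 0 := by
  have hd : 0 < (n : ℝ) - 2 * s := sub_pos.2 hns
  exact liouville_critical_general n hn s hs Lam K hK.isUpperBoundedKernel q
    (by rw [hq, one_lt_div hd]; linarith [hs.1]) (by rw [hq, mul_div_cancel₀ _ hd.ne']) u hu
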